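/- arXiv:2602.16797 — 2 statements merged into one kernel-verified Lean document; each statement's English description precedes it below -/
import Mathlib

section
/- Let A ∈ ℂ^{m×n} have full column rank and let S ∈ ℂ^{d×m} be a subspace embedding for A with distortion η ∈ [0,1). Let SA = UΣV* be an (economy-size) singular value decomposition of SA, set P := VΣ⁻¹, and let v₀ := P e_n / ‖P e_n‖ where e_n is the n-th standard basis vector (so v₀ is a unit vector). Then ‖A v₀‖² ≤ ((1+η)/(1−η)) · σ_min(A)², where σ_min(A) is the smallest singular value of A. -/
/-!
By the lower embedding bound `S A` is injective with `A`, so its singular values are positive and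
`v₀` is the right singular vector of `S A` for the smallest one. It therefore minimizes `‖S A u‖`
over unit vectors `u`, while `‖S A u‖` is comparable to `‖A u‖` up to the embedding constants:
`(1 - η) ‖A v₀‖² ≤ ‖S A v₀‖² ≤ ‖S A u‖² ≤ (1 + η) ‖A u‖²` for every unit vector `u`.
-/

open Matrix

/-- The linear action of a complex matrix on Euclidean space: `mulE A v = A v`. -/
noncomputable def mulE {m n : ℕ} (A : Matrix (Fin m) (Fin n) ℂ)
    (v : EuclideanSpace ℂ (Fin n)) : EuclideanSpace ℂ (Fin m) :=
  Matrix.toEuclideanLin A v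

/-- `S` is a subspace embedding for `A` with distortion `η`:
`(1-η)‖Ay‖² ≤ ‖SAy‖² ≤ (1+η)‖Ay‖²` for all `y`. -/
def IsSubspaceEmbedding {d m n : ℕ} (S : Matrix (Fin d) (Fin m) ℂ)
    (A : Matrix (Fin m) (Fin n) ℂ) (η : ℝ) : Prop :=
  ∀ y : EuclideanSpace ℂ (Fin n),
    (1 - η) * ‖mulE A y‖ ^ 2 ≤ ‖mulE (S * A) y‖ ^ 2 ∧
      ‖mulE (S * A) y‖ ^ 2 ≤ (1 + η) * ‖mulE A y‖ ^ 2

/-- `σ` lists the singular values of `A` in decreasing order: `σ` is antitone, nonnegative,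
and there is an orthonormal (eigen)basis `B` with `AᴴA (B i) = σᵢ² • B i`. -/
def HasSingularValues {m n : ℕ} (A : Matrix (Fin m) (Fin n) ℂ) (σ : Fin n → ℝ) : Prop :=
  Antitone σ ∧ (∀ i, 0 ≤ σ i) ∧
    ∃ B : Fin n → EuclideanSpace ℂ (Fin n), Orthonormal ℂ B ∧
      ∀ i, mulE (Aᴴ * A) (B i) = ((σ i ^ 2 : ℝ) : ℂ) • B i

/-- The spectral norm (largest singular value) of a matrix, as the operator norm of its
action between Euclidean spaces. -/
noncomputable def specNorm {m n : ℕ} (A : Matrix (Fin m) (Fin n) ℂ) : ℝ :=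
  ‖LinearMap.toContinuousLinearMap (Matrix.toEuclideanLin A)‖

lemma injective_of_mul_norm_sq_le {R E F G : Type*} [Semiring R] [AddCommGroup E]
    [NormedAddCommGroup F] [SeminormedAddCommGroup G] [Module R E] [Module R F] [Module R G]
    {f : E →ₗ[R] F} {g : E →ₗ[R] G} (hf : Function.Injective f) {α : ℝ} (hα : 0 < α)
    (hfg : ∀ y, α * ‖f y‖ ^ 2 ≤ ‖g y‖ ^ 2) : Function.Injective g := by
  rw [injective_iff_map_eq_zero]
  intro y hgy
  have hfy : α * ‖f y‖ ^ 2 ≤ 0 := by simpa [hgy] using hfg y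
  have hfy_zero : f y = 0 := by
    rw [← norm_eq_zero, ← sq_eq_zero_iff]
    exact le_antisymm (nonpos_of_mul_nonpos_right hfy hα) (sq_nonneg _)
  exact (map_eq_zero_iff f hf).mp hfy_zero

section

variable {𝕜 : Type*} [RCLike 𝕜] {m n : Type*} [Fintype m] [Fintype n] [DecidableEq n]

lemma norm_toEuclideanLin_of_conjTranspose_mul_self_eq_one {M : Matrix m n 𝕜} (hM : Mᴴ * M = 1)
    (v : EuclideanSpace 𝕜 n) : ‖toEuclideanLin M v‖ = ‖v‖ := by
  classical
  have hadj : LinearMap.adjoint (toEuclideanLin M) ∘ₗ toEuclideanLin M = LinearMap.id := by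
    rw [← toEuclideanLin_conjTranspose_eq_adjoint, ← toLpLin_mul_same, hM, toLpLin_one]
  refine (toEuclideanLin M).toContinuousLinearMap.norm_map_iff_adjoint_comp_self.mpr ?_ v
  exact ContinuousLinearMap.coe_injective hadj

lemma toEuclideanLin_diagonal_single (t : n → 𝕜) (k : n) :
    toEuclideanLin (diagonal t) (EuclideanSpace.single k 1) =
      t k • EuclideanSpace.single k (1 : 𝕜) := by
  ext i
  obtain rfl | hik := eq_or_ne i k <;> simp [mulVec_diagonal, *]

lemma norm_mul_norm_le_norm_toEuclideanLin_diagonal {t : n → 𝕜} {k : n}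
    (hk : ∀ i, ‖t k‖ ≤ ‖t i‖) (z : EuclideanSpace 𝕜 n) :
    ‖t k‖ * ‖z‖ ≤ ‖toEuclideanLin (diagonal t) z‖ := by
  refine le_of_sq_le_sq ?_ (norm_nonneg _)
  calc (‖t k‖ * ‖z‖) ^ 2 = ∑ i, ‖t k‖ ^ 2 * ‖z i‖ ^ 2 := by
        rw [mul_pow, EuclideanSpace.norm_sq_eq, Finset.mul_sum]
    _ ≤ ∑ i, ‖t i‖ ^ 2 * ‖z i‖ ^ 2 := by gcongr with i; exact hk i
    _ = ‖toEuclideanLin (diagonal t) z‖ ^ 2 := by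
        simp [EuclideanSpace.norm_sq_eq, mulVec_diagonal, mul_pow]

lemma normalize_toEuclideanLin_mul_diagonal_single {V : Matrix m n 𝕜} (hV : Vᴴ * V = 1)
    {r : n → ℝ} {k : n} (hk : 0 < r k) :
    NormedSpace.normalize
        (toEuclideanLin (V * diagonal fun i ↦ (r i : 𝕜)) (EuclideanSpace.single k 1)) =
      toEuclideanLin V (EuclideanSpace.single k 1) := by
  have hnorm : ‖toEuclideanLin V (EuclideanSpace.single k 1)‖ = 1 := by
    simp [norm_toEuclideanLin_of_conjTranspose_mul_self_eq_one hV]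
  rw [toLpLin_mul_same, LinearMap.comp_apply, toEuclideanLin_diagonal_single, map_smul,
    ← RCLike.real_smul_eq_coe_smul (K := 𝕜), NormedSpace.normalize_smul_of_pos hk,
    NormedSpace.normalize_eq_self_of_norm_eq_one hnorm]

end

/-- `B = U Σ Vᴴ` is an economy-size singular value decomposition: `U` has orthonormal columns, `V`
is unitary and `Σ` is the square diagonal matrix of the singular values `s`, in any order. -/
structure IsSVD {𝕜 d n : Type*} [RCLike 𝕜] [Fintype d] [Fintype n] [DecidableEq n]
    (B : Matrix d n 𝕜) (U : Matrix d n 𝕜) (s : n → ℝ) (V : Matrix n n 𝕜) : Prop where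
  left_orthonormal : Uᴴ * U = 1
  right_unitary : Vᴴ * V = 1
  nonneg : ∀ i, 0 ≤ s i
  eq_mul : B = U * diagonal (fun i ↦ (s i : 𝕜)) * Vᴴ

namespace IsSVD

variable {𝕜 d n : Type*} [RCLike 𝕜] [Fintype d] [Fintype n] [DecidableEq n]
  {B U : Matrix d n 𝕜} {s : n → ℝ} {V : Matrix n n 𝕜}

lemma norm_apply (h : IsSVD B U s V) (u : EuclideanSpace 𝕜 n) :
    ‖toEuclideanLin B u‖ =
      ‖toEuclideanLin (diagonal fun i ↦ (s i : 𝕜)) (toEuclideanLin Vᴴ u)‖ := by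
  rw [h.eq_mul, Matrix.mul_assoc, toLpLin_mul_same, LinearMap.comp_apply,
    norm_toEuclideanLin_of_conjTranspose_mul_self_eq_one h.left_orthonormal, toLpLin_mul_same,
    LinearMap.comp_apply]

lemma norm_apply_right_single (h : IsSVD B U s V) (k : n) :
    ‖toEuclideanLin B (toEuclideanLin V (EuclideanSpace.single k 1))‖ = s k := by
  rw [h.norm_apply, ← LinearMap.comp_apply (toEuclideanLin Vᴴ), ← toLpLin_mul_same,
    h.right_unitary, toLpLin_one, LinearMap.id_apply, toEuclideanLin_diagonal_single, norm_smul]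
  simp [abs_of_nonneg (h.nonneg k)]

lemma mul_norm_le_norm_apply (h : IsSVD B U s V) {k : n} (hk : ∀ i, s k ≤ s i)
    (u : EuclideanSpace 𝕜 n) : s k * ‖u‖ ≤ ‖toEuclideanLin B u‖ := by
  have hV : Vᴴᴴ * Vᴴ = 1 := by
    rw [conjTranspose_conjTranspose, mul_eq_one_comm.mp h.right_unitary]
  have hnorm (i : n) : ‖(s i : 𝕜)‖ = s i := RCLike.norm_of_nonneg (h.nonneg i)
  rw [h.norm_apply, ← norm_toEuclideanLin_of_conjTranspose_mul_self_eq_one hV u, ← hnorm k]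
  refine norm_mul_norm_le_norm_toEuclideanLin_diagonal (t := fun i ↦ (s i : 𝕜)) (fun i ↦ ?_) _
  simpa only [hnorm] using hk i

lemma pos_of_injective (h : IsSVD B U s V) (hB : Function.Injective (toEuclideanLin B)) (k : n) :
    0 < s k := by
  have hV : toEuclideanLin V (EuclideanSpace.single k 1) ≠ 0 := by
    rw [← norm_ne_zero_iff,
      norm_toEuclideanLin_of_conjTranspose_mul_self_eq_one h.right_unitary]
    simp
  rw [← h.norm_apply_right_single k, norm_pos_iff]
  exact (map_ne_zero_iff _ hB).mpr hV

end IsSVD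

theorem sketch_and_solve_min_singular_vector_general
    {𝕜 d m n : Type*} [RCLike 𝕜] [Fintype d] [Fintype m] [Fintype n] [DecidableEq n]
    {A : Matrix m n 𝕜} (hA : Function.Injective (toEuclideanLin A)) {S : Matrix d m 𝕜}
    {α β : ℝ} (hα : 0 < α)
    (hlower : ∀ y, α * ‖toEuclideanLin A y‖ ^ 2 ≤ ‖toEuclideanLin (S * A) y‖ ^ 2)
    (hupper : ∀ y, ‖toEuclideanLin (S * A) y‖ ^ 2 ≤ β * ‖toEuclideanLin A y‖ ^ 2)
    {U : Matrix d n 𝕜} {s : n → ℝ} {V : Matrix n n 𝕜} (hSVD : IsSVD (S * A) U s V)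
    {k : n} (hk : ∀ i, s k ≤ s i) {u : EuclideanSpace 𝕜 n} (hu : ‖u‖ = 1) :
    ‖toEuclideanLin A (NormedSpace.normalize
        (toEuclideanLin (V * diagonal fun i ↦ ((s i)⁻¹ : 𝕜)) (EuclideanSpace.single k 1)))‖ ^ 2 ≤
      β / α * ‖toEuclideanLin A u‖ ^ 2 := by
  have hsk : 0 < s k := hSVD.pos_of_injective (injective_of_mul_norm_sq_le hA hα hlower) k
  have hv₀ := normalize_toEuclideanLin_mul_diagonal_single (r := fun i ↦ (s i)⁻¹)
    hSVD.right_unitary (inv_pos.mpr hsk)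
  simp only [RCLike.ofReal_inv] at hv₀
  rw [hv₀, div_mul_eq_mul_div, le_div_iff₀' hα]
  set v₀ := toEuclideanLin V (EuclideanSpace.single k 1)
  calc α * ‖toEuclideanLin A v₀‖ ^ 2 ≤ ‖toEuclideanLin (S * A) v₀‖ ^ 2 := hlower v₀
    _ = (s k * ‖u‖) ^ 2 := by rw [hSVD.norm_apply_right_single, hu, mul_one]
    _ ≤ ‖toEuclideanLin (S * A) u‖ ^ 2 := by gcongr; exact hSVD.mul_norm_le_norm_apply hk u
    _ ≤ β * ‖toEuclideanLin A u‖ ^ 2 := hupper u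

/-- Sketch-and-solve initialization, Fact 3.2: with `P := VΣ⁻¹` built from an
SVD `SA = UΣVᴴ` (singular values sorted decreasingly) and `v₀ := P eₙ / ‖P eₙ‖`, one has
`‖A v₀‖² ≤ ((1+η)/(1−η))·σ_min(A)²`, where `σ_min(A)` is the smallest singular value of `A`,
characterized as the least value of `‖Au‖` over unit vectors `u`. -/
theorem sketch_and_solve_min_singular_vector
    {d m n : ℕ} (hn : 0 < n)
    (A : Matrix (Fin m) (Fin n) ℂ)
    (hrank : Function.Injective (mulE A))
    (S : Matrix (Fin d) (Fin m) ℂ) (η : ℝ) (hη0 : 0 ≤ η) (hη1 : η < 1)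
    (hS : IsSubspaceEmbedding S A η)
    (U : Matrix (Fin d) (Fin n) ℂ) (V : Matrix (Fin n) (Fin n) ℂ) (s : Fin n → ℝ)
    (hU : Uᴴ * U = 1) (hV : Vᴴ * V = 1) (hs0 : ∀ i, 0 ≤ s i) (hsa : Antitone s)
    (hSVD : S * A = U * Matrix.diagonal (fun i => (s i : ℂ)) * Vᴴ)
    (P : Matrix (Fin n) (Fin n) ℂ)
    (hP : P = V * Matrix.diagonal (fun i => ((s i : ℂ))⁻¹))
    (e : EuclideanSpace ℂ (Fin n))
    (he : e = EuclideanSpace.single ⟨n - 1, by omega⟩ (1 : ℂ))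
    (v0 : EuclideanSpace ℂ (Fin n))
    (hv0 : v0 = ‖mulE P e‖⁻¹ • mulE P e)
    (σmin : ℝ)
    (hσmin : IsLeast {r : ℝ | ∃ u : EuclideanSpace ℂ (Fin n), ‖u‖ = 1 ∧ r = ‖mulE A u‖} σmin) :
    ‖mulE A v0‖ ^ 2 ≤ (1 + η) / (1 - η) * σmin ^ 2 := by
  obtain ⟨⟨u, hu, rfl⟩, -⟩ := hσmin
  subst hP he hv0
  exact sketch_and_solve_min_singular_vector_general hrank (sub_pos.mpr hη1) (fun y ↦ (hS y).1)
    (fun y ↦ (hS y).2) ⟨hU, hV, hs0, hSVD⟩ (fun i ↦ hsa (Fin.mk_le_mk.mpr (by omega))) hu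
end

section
/- (RLOBPCG convergence: singular value bound.) Let A ∈ ℂ^{m×n} have full column rank with singular values σ₁ ≥ … ≥ σ_n > 0, set gap := (σ_{n−1}² − σ_n²)/σ_n², and let S ∈ ℂ^{d×m} be a subspace embedding for A with distortion η ∈ [0,1) satisfying η < gap/(2+gap). Let SA = UΣV* be an SVD of SA, set P := VΣ⁻¹, and v₀ = v_{−1} := P e_n/‖P e_n‖. For i ≥ 0 define w_i := P(P*(A*(A v_i) − ‖A v_i‖²·v_i)), and let v_{i+1} be a unit vector in span{v_{i−1}, v_i, w_i} with ‖A v_{i+1}‖ ≤ ‖A z‖ for every unit vector z ∈ span{v_{i−1}, v_i, w_i}. Then for every k ≥ 0, (‖A v_k‖² − σ_n²)/σ_n² ≤ C·gap·q^{2k}, where C := 2η/((1−η)·gap − 2η) and q := η + (1−η)/(1+gap). -/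
/-!
Write `H = Aᴴ A`, `M = (S A)ᴴ (S A)` and let `ρ = ‖A v‖²` be the Rayleigh quotient of the unit
vector `v`. Since `P Pᴴ = M⁻¹`, the direction is `w = M⁻¹ (H v - ρ v)`, so `x' = v - (1 - η²) w` is
a step of preconditioned inverse iteration. The embedding property says that `(1 - η²) M⁻¹`
approximates `H⁻¹` with relative error `η` in the `H`-norm; hence `x'` lies in the `H`-ball around
the exact inverse iterate `ρ H⁻¹ v` of radius `η ‖v - ρ H⁻¹ v‖`. Supporting functionals and the
Cauchy–Schwarz inequality show that this ball is contained in the cone of vectors with Rayleigh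
quotient at most `φ`, where `(φ - σₙ²) / (σₙ₋₁² - φ) = q² (ρ - σₙ²) / (σₙ₋₁² - ρ)`. A minimizer over
any space containing `v` and `w` does at least as well as `x'`, so the ratio contracts by `q²` at
every step; the previous iterate only enlarges the search space. The starting vector minimizes
`‖S A x‖` over the unit sphere, hence almost minimizes `‖A x‖`, which bounds the initial ratio
by `C`.
-/

open Matrix

open scoped InnerProductSpace

/-! ### The error ratio of a Rayleigh quotient -/

section ErrorRatio

variable {l₁ l₂ : ℝ}

/-- The error measure `(ρ - l₁) / (l₂ - ρ)` of a Rayleigh quotient `ρ ∈ [l₁, l₂)`, for `l₁` and `l₂`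
the two smallest eigenvalues: the quantity that each step of the iteration reduces by the
factor `q²`. -/
noncomputable def errorRatio (l₁ l₂ ρ : ℝ) : ℝ := (ρ - l₁) / (l₂ - ρ)

theorem errorRatio_pos {ρ : ℝ} (h₁ : l₁ < ρ) (h₂ : ρ < l₂) : 0 < errorRatio l₁ l₂ ρ :=
  div_pos (sub_pos.2 h₁) (sub_pos.2 h₂)

theorem strictMonoOn_errorRatio (h : l₁ < l₂) :
    StrictMonoOn (errorRatio l₁ l₂) (Set.Iio l₂) := by
  intro ρ hρ ρ' hρ' hlt
  rw [errorRatio, errorRatio, div_lt_div_iff₀ (sub_pos.2 hρ) (sub_pos.2 hρ')]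
  linear_combination mul_pos (sub_pos.2 h) (sub_pos.2 hlt)

theorem exists_errorRatio_eq (h : l₁ < l₂) {τ : ℝ} (hτ : 0 < τ) :
    ∃ φ ∈ Set.Ioo l₁ l₂, errorRatio l₁ l₂ φ = τ := by
  have h₁ : (l₁ + τ * l₂) / (1 + τ) - l₁ = τ * ((l₂ - l₁) / (1 + τ)) := by field_simp; ring
  have h₂ : l₂ - (l₁ + τ * l₂) / (1 + τ) = (l₂ - l₁) / (1 + τ) := by field_simp; ring
  have hpos : 0 < (l₂ - l₁) / (1 + τ) := div_pos (sub_pos.2 h) (by positivity)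
  refine ⟨(l₁ + τ * l₂) / (1 + τ), ⟨?_, ?_⟩, ?_⟩
  · exact sub_pos.1 (h₁ ▸ mul_pos hτ hpos)
  · exact sub_pos.1 (h₂ ▸ hpos)
  · rw [errorRatio, h₁, h₂, mul_div_cancel_right₀ _ hpos.ne']

theorem sub_le_errorRatio_mul {ρ : ℝ} (h₁ : l₁ ≤ ρ) (h₂ : ρ < l₂) :
    ρ - l₁ ≤ errorRatio l₁ l₂ ρ * (l₂ - l₁) := by
  have hpos : 0 < l₂ - ρ := sub_pos.2 h₂
  rw [errorRatio, div_mul_eq_mul_div, le_div_iff₀ hpos]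
  exact mul_le_mul_of_nonneg_left (by linarith) (sub_nonneg.2 h₁)

theorem two_mul_lt_of_lt_div {η gap : ℝ} (hgap : 0 ≤ gap) (hη : η < gap / (2 + gap)) :
    2 * η < (1 - η) * gap := by
  rw [lt_div_iff₀ (by positivity)] at hη
  linarith

theorem lt_one_add_mul_of_mul_le {η gap ρ : ℝ} (hl₁ : 0 < l₁) (hη : η < 1)
    (hgap : 2 * η < (1 - η) * gap) (hρ : (1 - η) * ρ ≤ (1 + η) * l₁) : ρ < (1 + gap) * l₁ := by
  refine lt_of_mul_lt_mul_left (hρ.trans_lt ?_) (sub_pos.2 hη).le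
  linear_combination mul_pos hl₁ (sub_pos.2 hgap)

-- At the extreme value `ρ = (1 + η) / (1 - η) * l₁` this is an equality.
theorem errorRatio_le_of_mul_le {η gap ρ : ℝ} (hl₁ : 0 < l₁) (hη : η < 1) (hgap₀ : 0 ≤ gap)
    (hgap : 2 * η < (1 - η) * gap) (hρ : (1 - η) * ρ ≤ (1 + η) * l₁) :
    errorRatio l₁ ((1 + gap) * l₁) ρ ≤ 2 * η / ((1 - η) * gap - 2 * η) := by
  have hlt := lt_one_add_mul_of_mul_le hl₁ hη hgap hρ
  rw [errorRatio, div_le_div_iff₀ (sub_pos.2 hlt) (sub_pos.2 hgap)]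
  linear_combination mul_nonneg hgap₀ (sub_nonneg.2 hρ)

end ErrorRatio

/-! ### Cones of small Rayleigh quotient for a diagonal form -/

section Cone

variable {ι : Type*} {μ x y w : ι → ℝ} {i₀ : ι} {μ₂ ρ φ γ q : ℝ}

theorem mul_sqrt_sub_mul_sub_add_sqrt_mul_le {X Y K L κ : ℝ} (hX : 0 ≤ X) (hY : 0 ≤ Y)
    (hXK : X ≤ κ * K) (hYL : Y ≤ κ * L) (hK : 0 ≤ K) (hL : 0 ≤ L) (hκ₀ : 0 ≤ κ) (hκ₁ : κ ≤ 1)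
    (hγ₀ : 0 ≤ γ) (hγ₁ : γ ≤ 1) :
    γ * √((K - X) * (L - Y)) + √(X * Y) ≤ (γ + (1 - γ) * κ) * √(K * L) := by
  have hXK' : 0 ≤ K - X := by nlinarith
  have hYL' : 0 ≤ L - Y := by nlinarith
  have hcs : √((K - X) * (L - Y)) + √(X * Y) ≤ √(K * L) := by
    simpa [Fin.sum_univ_two, Real.sqrt_mul, hX, hK, hXK'] using
      Real.sum_sqrt_mul_sqrt_le (f := ![K - X, X]) (g := ![L - Y, Y]) Finset.univ
        (by simp [Fin.forall_fin_two, hXK', hX]) (by simp [Fin.forall_fin_two, hYL', hY])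
  have hXY : √(X * Y) ≤ κ * √(K * L) := by
    rw [← Real.sqrt_sq hκ₀, ← Real.sqrt_mul (sq_nonneg κ)]
    apply Real.sqrt_le_sqrt
    calc X * Y ≤ (κ * K) * (κ * L) := by gcongr
      _ = κ ^ 2 * (K * L) := by ring
  linear_combination γ * hcs + (1 - γ) * hXY

theorem mul_sqrt_mul_sub_mul_mul_sub_le {A B X Y Z K : ℝ} (hXA : X ≤ A) (hYB : Y ≤ B)
    (hφ₀ : 0 ≤ φ) (hφρ : φ ≤ ρ) (hγ₀ : 0 ≤ γ) (hK : 1 ≤ K) (hZ : Z ≤ √(K * (X * Y)))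
    (h : γ * √((A - X) * (B - Y)) + √(X * Y) ≤ q * √(A * B)) :
    γ * √(ρ * (A - X) * (φ * (B - Y))) ≤ ρ * (√K * (q * √(A * B)) - Z) := by
  have hρ₀ : 0 ≤ ρ := hφ₀.trans hφρ
  have hXA' : 0 ≤ A - X := sub_nonneg.2 hXA
  have hYB' : 0 ≤ B - Y := sub_nonneg.2 hYB
  have hφ : √(ρ * (A - X) * (φ * (B - Y))) ≤ ρ * √((A - X) * (B - Y)) := by
    rw [← Real.sqrt_sq hρ₀, ← Real.sqrt_mul (sq_nonneg ρ), Real.sqrt_sq hρ₀]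
    apply Real.sqrt_le_sqrt
    calc ρ * (A - X) * (φ * (B - Y)) ≤ ρ * (A - X) * (ρ * (B - Y)) := by gcongr
      _ = ρ ^ 2 * ((A - X) * (B - Y)) := by ring
  rw [Real.sqrt_mul (by linarith)] at hZ
  calc γ * √(ρ * (A - X) * (φ * (B - Y)))
      ≤ ρ * (γ * √((A - X) * (B - Y))) := by linear_combination γ * hφ
    _ ≤ ρ * (√K * (γ * √((A - X) * (B - Y)))) :=
        mul_le_mul_of_nonneg_left
          (le_mul_of_one_le_left (by positivity) (Real.one_le_sqrt.2 hK)) hρ₀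
    _ ≤ ρ * (√K * (q * √(A * B) - √(X * Y))) := by gcongr; linarith
    _ ≤ ρ * (√K * (q * √(A * B)) - Z) := by rw [mul_sub]; gcongr

theorem sum_sub_mul_sq_div_nonneg {J : Finset ι} (hμ₂ : 0 < μ₂) (hJ : ∀ j ∈ J, μ₂ ≤ μ j)
    (hρ : ρ ≤ μ₂) : 0 ≤ ∑ j ∈ J, (μ j - ρ) * x j ^ 2 / μ j :=
  Finset.sum_nonneg fun j hj => div_nonneg
    (mul_nonneg (by linarith [hJ j hj]) (sq_nonneg _)) (hμ₂.le.trans (hJ j hj))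

theorem sum_sub_mul_sq_div_le {J : Finset ι} (hμ₂ : 0 < μ₂) (hJ : ∀ j ∈ J, μ₂ ≤ μ j)
    (hρ : ρ ≤ μ₂) :
    ∑ j ∈ J, (μ j - ρ) * x j ^ 2 / μ j ≤ (∑ j ∈ J, (μ j - ρ) * x j ^ 2) / μ₂ := by
  rw [Finset.sum_div]
  refine Finset.sum_le_sum fun j hj => div_le_div_of_nonneg_left ?_ hμ₂ (hJ j hj)
  exact mul_nonneg (by linarith [hJ j hj]) (sq_nonneg _)

-- The constant is the value at `μ j = μ₂` of the decreasing function `(μ j - φ) / (μ j - ρ)`.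
theorem sq_sum_sub_mul_mul_div_le {J : Finset ι} (hμ₂ : 0 < μ₂) (hJ : ∀ j ∈ J, μ₂ ≤ μ j)
    (hφρ : φ ≤ ρ) (hρ : ρ < μ₂) :
    (∑ j ∈ J, (μ j - φ) * w j * x j / μ j) ^ 2 ≤ (μ₂ - φ) / (μ₂ - ρ) *
      ((∑ j ∈ J, (μ j - ρ) * x j ^ 2 / μ j) * ∑ j ∈ J, (μ j - φ) * w j ^ 2 / μ j) := by
  have hμ : ∀ j ∈ J, 0 < μ j := fun j hj => hμ₂.trans_le (hJ j hj)
  have hμρ : ∀ j ∈ J, 0 < μ j - ρ := fun j hj => by linarith [hJ j hj]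
  have hμφ : ∀ j ∈ J, 0 < μ j - φ := fun j hj => by linarith [hμρ j hj]
  have hμ₂ρ : 0 < μ₂ - ρ := sub_pos.2 hρ
  rw [mul_left_comm, Finset.mul_sum]
  refine Finset.sum_sq_le_sum_mul_sum_of_sq_le_mul J (fun j hj => ?_) (fun j hj => ?_)
    (fun j hj => ?_)
  · have := hμ j hj; have := hμρ j hj; positivity
  · have := hμ j hj; have := hμφ j hj; have : 0 < μ₂ - φ := by linarith
    positivity
  · have hratio : μ j - φ ≤ (μ₂ - φ) / (μ₂ - ρ) * (μ j - ρ) := by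
      rw [div_mul_eq_mul_div, le_div_iff₀ hμ₂ρ]
      linear_combination mul_nonneg (sub_nonneg.2 hφρ) (sub_nonneg.2 (hJ j hj))
    calc ((μ j - φ) * w j * x j / μ j) ^ 2
        = (μ j - φ) * ((μ j - φ) * (w j * x j / μ j) ^ 2) := by ring
      _ ≤ (μ₂ - φ) / (μ₂ - ρ) * (μ j - ρ) * ((μ j - φ) * (w j * x j / μ j) ^ 2) :=
          mul_le_mul_of_nonneg_right hratio (mul_nonneg (hμφ j hj).le (sq_nonneg _))
      _ = (μ j - ρ) * x j ^ 2 / μ j * ((μ₂ - φ) / (μ₂ - ρ) * ((μ j - φ) * w j ^ 2 / μ j)) := by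
          ring

theorem sub_mul_mul_div_eq_sqrt {l₁ l₂ s t : ℝ} (hl₁ : 0 < l₁) (hφ₁ : l₁ ≤ φ) (hφ₂ : φ < l₂)
    (hρ : ρ < l₂) (hq₀ : 0 ≤ q) (hratio : errorRatio l₁ l₂ φ = q ^ 2 * errorRatio l₁ l₂ ρ)
    (hs : 0 ≤ s) (ht : 0 ≤ t) :
    (φ - l₁) * t * s / l₁ = √((l₂ - φ) / (l₂ - ρ)) *
      (q * √((ρ - l₁) * s ^ 2 / l₁ * ((φ - l₁) * t ^ 2 / l₁))) := by
  have hl₂φ : 0 < l₂ - φ := sub_pos.2 hφ₂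
  have hl₂ρ : 0 < l₂ - ρ := sub_pos.2 hρ
  have hφl : φ - l₁ = (l₂ - φ) / (l₂ - ρ) * q ^ 2 * (ρ - l₁) := by
    rw [errorRatio, errorRatio, div_eq_iff hl₂φ.ne'] at hratio
    rw [hratio]
    ring
  have hnonneg : 0 ≤ (φ - l₁) * t * s / l₁ := by
    have := sub_nonneg.2 hφ₁
    positivity
  have hsq : ((φ - l₁) * t * s / l₁) ^ 2 = q ^ 2 * ((l₂ - φ) / (l₂ - ρ) *
      ((ρ - l₁) * s ^ 2 / l₁ * ((φ - l₁) * t ^ 2 / l₁))) := by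
    linear_combination ((φ - l₁) * (t * s / l₁) ^ 2) * hφl
  rw [mul_left_comm, ← Real.sqrt_mul (by positivity), ← Real.sqrt_sq hnonneg, hsq,
    Real.sqrt_mul (sq_nonneg q), Real.sqrt_sq hq₀]

theorem le_of_forall_ne_le {t : ℝ} (h₀ : t ≤ μ i₀) (ht : t ≤ μ₂) (hμ₂ : ∀ j ≠ i₀, μ₂ ≤ μ j)
    (i : ι) : t ≤ μ i := by
  rcases eq_or_ne i i₀ with rfl | hi
  exacts [h₀, ht.trans (hμ₂ i hi)]

variable [Fintype ι]

theorem sum_sub_sq_mul_sq_div_eq [DecidableEq ι] (hμ : ∀ i, μ i ≠ 0)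
    (hx : ∑ i, (μ i - ρ) * x i ^ 2 = 0) :
    ∑ i, (μ i - ρ) ^ 2 * x i ^ 2 / μ i = ρ * ((ρ - μ i₀) * x i₀ ^ 2 / μ i₀ -
      ∑ j ∈ Finset.univ.erase i₀, (μ j - ρ) * x j ^ 2 / μ j) := by
  have hsplit := Finset.add_sum_erase _ (fun i => (μ i - ρ) * x i ^ 2 / μ i) (Finset.mem_univ i₀)
  have hterm : ∀ i, (μ i - ρ) ^ 2 * x i ^ 2 / μ i =
      (μ i - ρ) * x i ^ 2 - ρ * ((μ i - ρ) * x i ^ 2 / μ i) := fun i => by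
    have := hμ i
    field_simp
  rw [Finset.sum_congr rfl fun i _ => hterm i, Finset.sum_sub_distrib, hx, ← Finset.mul_sum,
    ← hsplit]
  ring

theorem sum_erase_le_of_rayleigh_eq [DecidableEq ι] (hμ₀ : 0 < μ i₀)
    (hμ₂ : ∀ j ≠ i₀, μ₂ ≤ μ j) (hρ₀ : μ i₀ ≤ ρ) (hρ : ρ < μ₂)
    (hx : ∑ i, (μ i - ρ) * x i ^ 2 = 0) :
    ∑ j ∈ Finset.univ.erase i₀, (μ j - ρ) * x j ^ 2 / μ j ≤
      μ i₀ / μ₂ * ((ρ - μ i₀) * x i₀ ^ 2 / μ i₀) := by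
  have hμ₂pos : 0 < μ₂ := by linarith
  have htail : ∑ j ∈ Finset.univ.erase i₀, (μ j - ρ) * x j ^ 2 = (ρ - μ i₀) * x i₀ ^ 2 := by
    rw [← Finset.add_sum_erase _ _ (Finset.mem_univ i₀)] at hx
    linear_combination hx
  calc ∑ j ∈ Finset.univ.erase i₀, (μ j - ρ) * x j ^ 2 / μ j
      ≤ (ρ - μ i₀) * x i₀ ^ 2 / μ₂ := htail ▸ sum_sub_mul_sq_div_le hμ₂pos
        (fun j hj => hμ₂ j (Finset.ne_of_mem_erase hj)) hρ.le
    _ = μ i₀ / μ₂ * ((ρ - μ i₀) * x i₀ ^ 2 / μ i₀) := by field_simp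

theorem sum_sub_mul_mul_div_eq [DecidableEq ι] (w x : ι → ℝ) :
    ∑ i, (φ - μ i) * w i * x i / μ i =
    (φ - μ i₀) * w i₀ * x i₀ / μ i₀ -
      ∑ j ∈ Finset.univ.erase i₀, (μ j - φ) * w j * x j / μ j := by
  rw [← Finset.add_sum_erase _ _ (Finset.mem_univ i₀), sub_eq_add_neg (_ / μ i₀),
    ← Finset.sum_neg_distrib, add_right_inj]
  exact Finset.sum_congr rfl fun j _ => by ring

-- Geometrically: the functional `(1 - φ H⁻¹) w` supporting the cone of Rayleigh quotients at most
-- `φ` is nonnegative on the ball around `ρ H⁻¹ x`, all norms being those of `H = diag μ`.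
theorem mul_sqrt_sum_mul_sum_le_of_rayleigh_eq (hμ₀ : 0 < μ i₀) (hμ₂ : ∀ j ≠ i₀, μ₂ ≤ μ j)
    (hφ₀ : μ i₀ ≤ φ) (hφρ : φ ≤ ρ) (hρ : ρ < μ₂) (hγ₀ : 0 ≤ γ) (hγ₁ : γ ≤ 1)
    (hq : q = γ + (1 - γ) * (μ i₀ / μ₂))
    (hratio : errorRatio (μ i₀) μ₂ φ = q ^ 2 * errorRatio (μ i₀) μ₂ ρ)
    (hx₀ : 0 ≤ x i₀) (hx : ∑ i, (μ i - ρ) * x i ^ 2 = 0)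
    (hw₀ : 0 ≤ w i₀) (hw : ∑ i, (μ i - φ) * w i ^ 2 = 0) :
    γ * √((∑ i, (μ i - ρ) ^ 2 * x i ^ 2 / μ i) * ∑ i, (μ i - φ) ^ 2 * w i ^ 2 / μ i) ≤
      ρ * ∑ i, (φ - μ i) * w i * x i / μ i := by
  classical
  have hμ₂pos : 0 < μ₂ := by linarith
  have hJ : ∀ j ∈ Finset.univ.erase i₀, μ₂ ≤ μ j := fun j hj => hμ₂ j (Finset.ne_of_mem_erase hj)
  have hμ : ∀ i, μ i ≠ 0 := fun i =>
    (hμ₀.trans_le (le_of_forall_ne_le le_rfl (by linarith) hμ₂ i)).ne'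
  rw [sum_sub_sq_mul_sq_div_eq hμ hx (i₀ := i₀), sum_sub_sq_mul_sq_div_eq hμ hw (i₀ := i₀),
    sum_sub_mul_mul_div_eq w x (i₀ := i₀), sub_mul_mul_div_eq_sqrt hμ₀ hφ₀
      (hφρ.trans_lt hρ) hρ (by have := sub_nonneg.2 hγ₁; rw [hq]; positivity) hratio hx₀ hw₀]
  have hA := sum_erase_le_of_rayleigh_eq hμ₀ hμ₂ (hφ₀.trans hφρ) hρ hx
  have hB := sum_erase_le_of_rayleigh_eq hμ₀ hμ₂ hφ₀ (hφρ.trans_lt hρ) hw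
  set A := (ρ - μ i₀) * x i₀ ^ 2 / μ i₀
  set B := (φ - μ i₀) * w i₀ ^ 2 / μ i₀
  have hA₀ : 0 ≤ A := div_nonneg (mul_nonneg (by linarith) (sq_nonneg _)) hμ₀.le
  have hB₀ : 0 ≤ B := div_nonneg (mul_nonneg (by linarith) (sq_nonneg _)) hμ₀.le
  have hκ : μ i₀ / μ₂ ≤ 1 := (div_le_one hμ₂pos).2 (by linarith)
  refine mul_sqrt_mul_sub_mul_mul_sub_le (hA.trans (mul_le_of_le_one_left hA₀ hκ))
    (hB.trans (mul_le_of_le_one_left hB₀ hκ)) (by linarith) hφρ hγ₀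
    ((one_le_div (by linarith)).2 (by linarith))
    (Real.le_sqrt_of_sq_le (sq_sum_sub_mul_mul_div_le hμ₂pos hJ hφρ hρ)) ?_
  rw [hq]
  exact mul_sqrt_sub_mul_sub_add_sqrt_mul_le (sum_sub_mul_sq_div_nonneg hμ₂pos hJ hρ.le)
    (sum_sub_mul_sq_div_nonneg hμ₂pos hJ (hφρ.trans hρ.le)) hA hB hA₀ hB₀ (by positivity) hκ
    hγ₀ hγ₁

-- Take `w = y` off `i₀`, with `w i₀` moved to the boundary of the cone.
theorem sum_sub_mul_sq_nonpos_of_forall_dual (h₀ : μ i₀ < φ) (hφ : ∀ j ≠ i₀, φ ≤ μ j)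
    (hdual : ∀ w : ι → ℝ, 0 ≤ w i₀ → ∑ i, (μ i - φ) * w i ^ 2 = 0 →
      0 ≤ ∑ i, (φ - μ i) * w i * y i) :
    ∑ i, (μ i - φ) * y i ^ 2 ≤ 0 := by
  classical
  have hsplit (f : ι → ℝ) := Finset.add_sum_erase _ f (Finset.mem_univ i₀)
  have hφ₀ : 0 < φ - μ i₀ := sub_pos.2 h₀
  set T := ∑ j ∈ Finset.univ.erase i₀, (μ j - φ) * y j ^ 2 with hT
  have hT₀ : 0 ≤ T := Finset.sum_nonneg fun j hj =>
    mul_nonneg (sub_nonneg.2 (hφ j (Finset.ne_of_mem_erase hj))) (sq_nonneg _)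
  set t := √(T / (φ - μ i₀)) with ht
  have ht₀ : 0 ≤ t := Real.sqrt_nonneg _
  have hTt : T = (φ - μ i₀) * t ^ 2 := by
    rw [ht, Real.sq_sqrt (by positivity), mul_div_cancel₀ _ hφ₀.ne']
  have hw : ∀ j ∈ Finset.univ.erase i₀, Function.update y i₀ t j = y j := fun j hj =>
    Function.update_of_ne (Finset.ne_of_mem_erase hj) _ _
  have hpair := hdual (Function.update y i₀ t) (by simpa using ht₀) (by
    rw [← hsplit, Finset.sum_congr rfl fun j hj => by rw [hw j hj], ← hT, hTt,
      Function.update_self]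
    ring)
  rw [← hsplit, Finset.sum_congr rfl fun j hj => by rw [hw j hj], Function.update_self,
    Finset.sum_congr rfl fun j _ => show (φ - μ j) * y j * y j = -((μ j - φ) * y j ^ 2) by ring,
    Finset.sum_neg_distrib, ← hT, hTt] at hpair
  have hty : t ≤ y i₀ ∨ t = 0 := by
    refine or_iff_not_imp_right.2 fun hne => ?_
    have : 0 < (φ - μ i₀) * t := mul_pos hφ₀ (ht₀.lt_of_ne' hne)
    refine le_of_mul_le_mul_left ?_ this
    linear_combination hpair
  rw [← hsplit, ← hT, hTt]
  have : t ^ 2 ≤ y i₀ ^ 2 := by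
    rcases hty with h | h
    · gcongr
    · rw [h, zero_pow two_ne_zero]
      exact sq_nonneg _
  linear_combination (φ - μ i₀) * this

theorem sum_sub_mul_sq_nonpos_of_sum_mul_sub_sq_le (hμ₀ : 0 < μ i₀) (hμ₂ : ∀ j ≠ i₀, μ₂ ≤ μ j)
    (hφ₀ : μ i₀ < φ) (hφρ : φ ≤ ρ) (hρ : ρ < μ₂) (hγ₀ : 0 ≤ γ) (hγ₁ : γ ≤ 1)
    (hq : q = γ + (1 - γ) * (μ i₀ / μ₂))
    (hratio : errorRatio (μ i₀) μ₂ φ = q ^ 2 * errorRatio (μ i₀) μ₂ ρ)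
    (hx₀ : 0 ≤ x i₀) (hx : ∑ i, (μ i - ρ) * x i ^ 2 = 0)
    (hy : ∑ i, μ i * (y i - ρ * x i / μ i) ^ 2 ≤
      γ ^ 2 * ∑ i, (μ i - ρ) ^ 2 * x i ^ 2 / μ i) :
    ∑ i, (μ i - φ) * y i ^ 2 ≤ 0 := by
  have hμ : ∀ i, 0 < μ i := fun i =>
    hμ₀.trans_le (le_of_forall_ne_le le_rfl (by linarith) hμ₂ i)
  refine sum_sub_mul_sq_nonpos_of_forall_dual hφ₀ (fun j hj => by linarith [hμ₂ j hj])
    fun w hw₀ hw => ?_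
  have hcenter := mul_sqrt_sum_mul_sum_le_of_rayleigh_eq hμ₀ hμ₂ hφ₀.le hφρ hρ hγ₀ hγ₁ hq hratio
    hx₀ hx hw₀ hw
  set R := ∑ i, (μ i - ρ) ^ 2 * x i ^ 2 / μ i
  set N := ∑ i, (μ i - φ) ^ 2 * w i ^ 2 / μ i
  have hN₀ : 0 ≤ N := Finset.sum_nonneg fun i _ => by have := hμ i; positivity
  have hdev : (∑ i, (φ - μ i) * w i * (y i - ρ * x i / μ i)) ^ 2 ≤ γ ^ 2 * (R * N) := by
    calc (∑ i, (φ - μ i) * w i * (y i - ρ * x i / μ i)) ^ 2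
        ≤ (∑ i, μ i * (y i - ρ * x i / μ i) ^ 2) * N := by
          refine Finset.sum_sq_le_sum_mul_sum_of_sq_le_mul _ (fun i _ => ?_) (fun i _ => ?_)
            fun i _ => ?_
          · have := hμ i; positivity
          · have := hμ i; positivity
          · have := (hμ i).ne'
            exact le_of_eq (by field_simp; ring)
      _ ≤ γ ^ 2 * R * N := by gcongr
      _ = γ ^ 2 * (R * N) := by ring
  have habs := Real.abs_le_sqrt hdev
  rw [Real.sqrt_mul (sq_nonneg γ), Real.sqrt_sq hγ₀] at habs
  calc (0 : ℝ) ≤ ρ * ∑ i, (φ - μ i) * w i * x i / μ i +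
        ∑ i, (φ - μ i) * w i * (y i - ρ * x i / μ i) := by linarith [neg_le_of_abs_le habs]
    _ = ∑ i, (φ - μ i) * w i * y i := by
      rw [Finset.mul_sum, ← Finset.sum_add_distrib]
      exact Finset.sum_congr rfl fun i _ => by ring

end Cone

/-! ### Preconditioned inverse iteration in an inner product space -/

section GramEigenbasis

variable {𝕜 E F G ι : Type*} [RCLike 𝕜] [Fintype ι]
  [NormedAddCommGroup E] [InnerProductSpace 𝕜 E] [NormedAddCommGroup F] [InnerProductSpace 𝕜 F]
  [NormedAddCommGroup G] [InnerProductSpace 𝕜 G]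
  {a : E →ₗ[𝕜] F} {c : E →ₗ[𝕜] G} {b : OrthonormalBasis ι 𝕜 E} {μ : ι → ℝ} {i₀ : ι}
  {μ₂ ρ φ γ η q : ℝ} {x y z : E}

/-- The orthonormal basis `b` consists of eigenvectors of the Gram operator `a* a`, with eigenvalues
`μ`. This is stated weakly, through the form `⟪a ·, a ·⟫`, so that no adjoint is needed. -/
def IsGramEigenbasis (a : E →ₗ[𝕜] F) (b : OrthonormalBasis ι 𝕜 E) (μ : ι → ℝ) : Prop :=
  ∀ i x, ⟪a (b i), a x⟫_𝕜 = (μ i : 𝕜) * ⟪b i, x⟫_𝕜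

namespace IsGramEigenbasis

theorem inner_map_map (h : IsGramEigenbasis a b μ) (x y : E) :
    ⟪a x, a y⟫_𝕜 = ∑ i, (μ i : 𝕜) * (⟪x, b i⟫_𝕜 * ⟪b i, y⟫_𝕜) := by
  conv_lhs => rw [← b.sum_repr' x, map_sum, sum_inner]
  simp only [map_smul, inner_smul_left, h _ y, inner_conj_symm, mul_left_comm]

theorem norm_map_sq (h : IsGramEigenbasis a b μ) (x : E) :
    ‖a x‖ ^ 2 = ∑ i, μ i * ‖⟪b i, x⟫_𝕜‖ ^ 2 := by
  rw [← inner_self_eq_norm_sq (𝕜 := 𝕜), h.inner_map_map, map_sum]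
  refine Finset.sum_congr rfl fun i _ => ?_
  rw [RCLike.re_ofReal_mul, inner_mul_symm_re_eq_norm, norm_mul, norm_inner_symm, sq]

theorem sum_sub_mul_norm_inner_sq (h : IsGramEigenbasis a b μ) (t : ℝ) (x : E) :
    ∑ i, (μ i - t) * ‖⟪b i, x⟫_𝕜‖ ^ 2 = ‖a x‖ ^ 2 - t * ‖x‖ ^ 2 := by
  simp only [sub_mul, Finset.sum_sub_distrib, h.norm_map_sq, ← Finset.mul_sum,
    b.sum_sq_norm_inner_right]

theorem mul_norm_sq_le (h : IsGramEigenbasis a b μ) {t : ℝ} (ht : ∀ i, t ≤ μ i) (x : E) :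
    t * ‖x‖ ^ 2 ≤ ‖a x‖ ^ 2 := by
  rw [← sub_nonneg, ← h.sum_sub_mul_norm_inner_sq]
  exact Finset.sum_nonneg fun i _ => mul_nonneg (sub_nonneg.2 (ht i)) (sq_nonneg _)

theorem norm_map_basis_sq (h : IsGramEigenbasis a b μ) (i : ι) : ‖a (b i)‖ ^ 2 = μ i := by
  rw [← inner_self_eq_norm_sq (𝕜 := 𝕜), h, RCLike.re_ofReal_mul, inner_self_eq_norm_sq,
    b.norm_eq_one, one_pow, mul_one]

theorem exists_inner_map_eq (h : IsGramEigenbasis a b μ) (hμ : ∀ i, μ i ≠ 0) (ρ : ℝ) (x : E) :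
    ∃ y, ∀ p, ⟪a p, a y⟫_𝕜 = (ρ : 𝕜) * ⟪p, x⟫_𝕜 := by
  refine ⟨∑ i, ((ρ / μ i : ℝ) * ⟪b i, x⟫_𝕜) • b i, fun p => ?_⟩
  rw [map_sum, inner_sum, ← b.sum_inner_mul_inner, Finset.mul_sum]
  refine Finset.sum_congr rfl fun i _ => ?_
  have hi : (μ i : 𝕜) ≠ 0 := RCLike.ofReal_ne_zero.2 (hμ i)
  rw [map_smul, inner_smul_right, ← inner_conj_symm (a p), h, map_mul, RCLike.conj_ofReal,
    inner_conj_symm, RCLike.ofReal_div]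
  field_simp

theorem inner_basis_eq (h : IsGramEigenbasis a b μ) (hμ : ∀ i, μ i ≠ 0)
    (hy : ∀ p, ⟪a p, a y⟫_𝕜 = (ρ : 𝕜) * ⟪p, x⟫_𝕜) (i : ι) :
    ⟪b i, y⟫_𝕜 = (ρ / μ i : ℝ) * ⟪b i, x⟫_𝕜 := by
  have hi : (μ i : 𝕜) ≠ 0 := RCLike.ofReal_ne_zero.2 (hμ i)
  have hiy := hy (b i)
  rw [h] at hiy
  rw [RCLike.ofReal_div, div_mul_eq_mul_div, eq_div_iff hi, ← hiy, mul_comm]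

theorem norm_map_sub_sq (h : IsGramEigenbasis a b μ) (hμ : ∀ i, μ i ≠ 0)
    (hy : ∀ p, ⟪a p, a y⟫_𝕜 = (ρ : 𝕜) * ⟪p, x⟫_𝕜) :
    ‖a (x - y)‖ ^ 2 = ∑ i, (μ i - ρ) ^ 2 * ‖⟪b i, x⟫_𝕜‖ ^ 2 / μ i := by
  rw [h.norm_map_sq]
  refine Finset.sum_congr rfl fun i _ => ?_
  have hi : ⟪b i, x - y⟫_𝕜 = ((1 - ρ / μ i : ℝ) : 𝕜) * ⟪b i, x⟫_𝕜 := by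
    rw [inner_sub_right, h.inner_basis_eq hμ hy]
    push_cast
    ring
  have := hμ i
  rw [hi, norm_mul, mul_pow, RCLike.norm_ofReal, sq_abs]
  field_simp

theorem sum_mul_sub_sq_le_norm_map_sub_sq (h : IsGramEigenbasis a b μ) (hμ : ∀ i, 0 < μ i)
    (hρ : 0 ≤ ρ) (hy : ∀ p, ⟪a p, a y⟫_𝕜 = (ρ : 𝕜) * ⟪p, x⟫_𝕜) (z : E) :
    ∑ i, μ i * (‖⟪b i, z⟫_𝕜‖ - ρ * ‖⟪b i, x⟫_𝕜‖ / μ i) ^ 2 ≤ ‖a (z - y)‖ ^ 2 := by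
  rw [h.norm_map_sq]
  refine Finset.sum_le_sum fun i _ => mul_le_mul_of_nonneg_left ?_ (hμ i).le
  have hi : ρ * ‖⟪b i, x⟫_𝕜‖ / μ i = ‖⟪b i, y⟫_𝕜‖ := by
    rw [h.inner_basis_eq (fun i => (hμ i).ne') hy, norm_mul, RCLike.norm_ofReal,
      abs_of_nonneg (div_nonneg hρ (hμ i).le), div_mul_eq_mul_div]
  rw [hi, inner_sub_right, sq_le_sq, abs_norm]
  exact abs_norm_sub_norm_le _ _

theorem norm_map_sq_le_of_norm_map_sub_sq_le (h : IsGramEigenbasis a b μ) (hμ₀ : 0 < μ i₀)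
    (hμ₂ : ∀ j ≠ i₀, μ₂ ≤ μ j) (hφ₀ : μ i₀ < φ) (hφρ : φ ≤ ρ) (hρ : ρ < μ₂)
    (hγ₀ : 0 ≤ γ) (hγ₁ : γ ≤ 1) (hq : q = γ + (1 - γ) * (μ i₀ / μ₂))
    (hratio : errorRatio (μ i₀) μ₂ φ = q ^ 2 * errorRatio (μ i₀) μ₂ ρ)
    (hx : ‖a x‖ ^ 2 = ρ * ‖x‖ ^ 2) (hy : ∀ p, ⟪a p, a y⟫_𝕜 = (ρ : 𝕜) * ⟪p, x⟫_𝕜)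
    (hz : ‖a (z - y)‖ ^ 2 ≤ γ ^ 2 * ‖a (x - y)‖ ^ 2) :
    ‖a z‖ ^ 2 ≤ φ * ‖z‖ ^ 2 := by
  have hμ : ∀ i, 0 < μ i := fun i =>
    hμ₀.trans_le (le_of_forall_ne_le le_rfl (by linarith) hμ₂ i)
  rw [← sub_nonpos, ← h.sum_sub_mul_norm_inner_sq]
  refine sum_sub_mul_sq_nonpos_of_sum_mul_sub_sq_le (x := fun i => ‖⟪b i, x⟫_𝕜‖) hμ₀ hμ₂ hφ₀ hφρ hρ
    hγ₀ hγ₁ hq hratio (norm_nonneg _) (by rw [h.sum_sub_mul_norm_inner_sq, hx, sub_self]) ?_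
  rw [← h.norm_map_sub_sq (fun i => (hμ i).ne') hy]
  exact (h.sum_mul_sub_sq_le_norm_map_sub_sq hμ (by linarith) hy z).trans hz

end IsGramEigenbasis

theorem re_inner_sub_re_inner_le (hη₀ : 0 ≤ η)
    (hc : ∀ y, (1 - η) * ‖a y‖ ^ 2 ≤ ‖c y‖ ^ 2 ∧ ‖c y‖ ^ 2 ≤ (1 + η) * ‖a y‖ ^ 2) (x y : E) :
    RCLike.re ⟪c x, c y⟫_𝕜 - RCLike.re ⟪a x, a y⟫_𝕜 ≤ η * ‖a x‖ * ‖a y‖ := by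
  set d := RCLike.re ⟪c x, c y⟫_𝕜 - RCLike.re ⟪a x, a y⟫_𝕜
  have hquad (t : ℝ) : 0 ≤ η * ‖a x‖ ^ 2 * (t * t) + (-2 * d) * t + η * ‖a y‖ ^ 2 := by
    have hadd := (hc ((t : 𝕜) • x + y)).2
    have hsub := (hc ((t : 𝕜) • x - y)).1
    simp only [map_add, map_sub, map_smul, @norm_add_sq 𝕜, @norm_sub_sq 𝕜, inner_smul_left,
      RCLike.conj_ofReal, RCLike.re_ofReal_mul, norm_smul, RCLike.norm_ofReal, mul_pow,
      sq_abs] at hadd hsub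
    linear_combination (hadd + hsub) / 2
  have hdisc := discrim_le_zero hquad
  rw [discrim] at hdisc
  refine le_of_abs_le (abs_le_of_sq_le_sq ?_ (by positivity))
  linear_combination hdisc / 4

theorem norm_map_sub_smul_le (hη₀ : 0 ≤ η) (hη₁ : η ≤ 1)
    (hc : ∀ y, (1 - η) * ‖a y‖ ^ 2 ≤ ‖c y‖ ^ 2 ∧ ‖c y‖ ^ 2 ≤ (1 + η) * ‖a y‖ ^ 2)
    (hz : ∀ p, ⟪c p, c z⟫_𝕜 = ⟪a p, a x⟫_𝕜) :
    ‖a (x - ((1 - η ^ 2 : ℝ) : 𝕜) • z)‖ ≤ η * ‖a x‖ := by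
  have hle : ‖a (x - z)‖ ≤ η * ‖a z‖ := by
    have h := re_inner_sub_re_inner_le hη₀ hc (x - z) z
    rw [hz, ← map_sub, ← inner_sub_right, ← map_sub, inner_self_eq_norm_sq] at h
    rcases (norm_nonneg (a (x - z))).eq_or_lt with h₀ | h₀
    · rw [← h₀]; positivity
    · refine le_of_mul_le_mul_left ?_ h₀
      linear_combination h
  have hsq : ‖a (x - z)‖ ^ 2 ≤ (η * ‖a z‖) ^ 2 := by gcongr
  have hη : 0 ≤ 1 - η ^ 2 := sub_nonneg.2 (pow_le_one₀ hη₀ hη₁)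
  refine le_of_sq_le_sq ?_ (by positivity)
  rw [map_sub, @norm_sub_sq 𝕜] at hsq ⊢
  rw [map_smul, inner_smul_right, RCLike.re_ofReal_mul, norm_smul, RCLike.norm_ofReal, mul_pow,
    sq_abs]
  linear_combination (1 - η ^ 2) * hsq

theorem ne_zero_of_norm_map_sub_sq_le (hρ : 0 < ρ) (hγ₀ : 0 ≤ γ) (hγ₁ : γ ≤ 1) (hx₁ : ‖x‖ = 1)
    (hx : ‖a x‖ ^ 2 = ρ) (hy : ∀ p, ⟪a p, a y⟫_𝕜 = (ρ : 𝕜) * ⟪p, x⟫_𝕜)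
    (hz : ‖a (z - y)‖ ^ 2 ≤ γ ^ 2 * ‖a (x - y)‖ ^ 2) : z ≠ 0 := by
  rintro rfl
  have hxy : RCLike.re ⟪a x, a y⟫_𝕜 = ρ := by
    rw [hy, RCLike.re_ofReal_mul, inner_self_eq_norm_sq, hx₁, one_pow, mul_one]
  have hpyth : ‖a (x - y)‖ ^ 2 = ‖a y‖ ^ 2 - ρ := by
    rw [map_sub, @norm_sub_sq 𝕜, hxy, hx]
    ring
  have hγ : γ ^ 2 * ‖a (x - y)‖ ^ 2 ≤ ‖a (x - y)‖ ^ 2 :=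
    mul_le_of_le_one_left (sq_nonneg _) (pow_le_one₀ hγ₀ hγ₁)
  rw [zero_sub, map_neg, norm_neg] at hz
  linarith

theorem mul_norm_le_norm_map_of_forall_unit {W : Submodule 𝕜 E} {r : ℝ}
    (h : ∀ y ∈ W, ‖y‖ = 1 → r ≤ ‖a y‖) (hy : y ∈ W) : r * ‖y‖ ≤ ‖a y‖ := by
  rcases eq_or_ne y 0 with rfl | hy₀
  · simp
  · have hunit := h _ (W.smul_mem ((‖y‖⁻¹ : ℝ) : 𝕜) hy) (by
      rw [RCLike.ofReal_inv]
      exact norm_smul_inv_norm hy₀)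
    rwa [map_smul, norm_smul, RCLike.norm_ofReal, abs_inv, abs_norm, inv_mul_eq_div,
      le_div_iff₀ (norm_pos_iff.2 hy₀)] at hunit

variable {v w : ℕ → E}

theorem norm_map_sq_lt_of_forall_span (hunit : ∀ i, ‖v i‖ = 1)
    (hmin : ∀ i, ∀ y ∈ Submodule.span 𝕜 {v i, w i}, ‖y‖ = 1 → ‖a (v (i + 1))‖ ≤ ‖a y‖)
    (hv₀ : ‖a (v 0)‖ ^ 2 < μ₂) (k : ℕ) : ‖a (v k)‖ ^ 2 < μ₂ := by
  have hanti : Antitone fun i => ‖a (v i)‖ := antitone_nat_of_succ_le fun i =>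
    hmin i (v i) (Submodule.subset_span (by simp)) (hunit i)
  refine lt_of_le_of_lt ?_ hv₀
  gcongr
  exact hanti k.zero_le

namespace IsGramEigenbasis

-- The competitor is `x' = x - (1 - η²) z`, a step of preconditioned inverse iteration.
theorem norm_map_sq_le_of_forall_span (h : IsGramEigenbasis a b μ) (hμ₀ : 0 < μ i₀)
    (hμ₂ : ∀ j ≠ i₀, μ₂ ≤ μ j) (hφ₀ : μ i₀ < φ) (hφρ : φ ≤ ρ) (hρ : ρ < μ₂)
    (hη₀ : 0 ≤ η) (hη₁ : η ≤ 1)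
    (hc : ∀ y, (1 - η) * ‖a y‖ ^ 2 ≤ ‖c y‖ ^ 2 ∧ ‖c y‖ ^ 2 ≤ (1 + η) * ‖a y‖ ^ 2)
    (hq : q = η + (1 - η) * (μ i₀ / μ₂))
    (hratio : errorRatio (μ i₀) μ₂ φ = q ^ 2 * errorRatio (μ i₀) μ₂ ρ)
    (hx₁ : ‖x‖ = 1) (hx : ‖a x‖ ^ 2 = ρ)
    (hz : ∀ p, ⟪c p, c z⟫_𝕜 = ⟪a p, a x⟫_𝕜 - (ρ : 𝕜) * ⟪p, x⟫_𝕜)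
    {r : ℝ} (hr₀ : 0 ≤ r) (hr : ∀ y ∈ Submodule.span 𝕜 {x, z}, ‖y‖ = 1 → r ≤ ‖a y‖) :
    r ^ 2 ≤ φ := by
  have hμ : ∀ i, 0 < μ i := fun i => hμ₀.trans_le (le_of_forall_ne_le le_rfl (by linarith) hμ₂ i)
  obtain ⟨y, hy⟩ := h.exists_inner_map_eq (fun i => (hμ i).ne') ρ x
  set x' := x - ((1 - η ^ 2 : ℝ) : 𝕜) • z with hx'
  have hball : ‖a (x' - y)‖ ^ 2 ≤ η ^ 2 * ‖a (x - y)‖ ^ 2 := by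
    rw [hx', sub_right_comm, ← mul_pow]
    gcongr
    refine norm_map_sub_smul_le hη₀ hη₁ hc fun p => ?_
    rw [hz, map_sub, inner_sub_right, hy]
  have hle : ‖a x'‖ ^ 2 ≤ φ * ‖x'‖ ^ 2 :=
    h.norm_map_sq_le_of_norm_map_sub_sq_le hμ₀ hμ₂ hφ₀ hφρ hρ hη₀ hη₁ hq hratio
      (by rw [hx, hx₁, one_pow, mul_one]) hy hball
  have hne : x' ≠ 0 :=
    ne_zero_of_norm_map_sub_sq_le (by linarith) hη₀ hη₁ hx₁ hx hy hball
  have hmem : x' ∈ Submodule.span 𝕜 {x, z} :=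
    Submodule.sub_mem _ (Submodule.subset_span (by simp))
      (Submodule.smul_mem _ _ (Submodule.subset_span (by simp)))
  have hrx : (r * ‖x'‖) ^ 2 ≤ ‖a x'‖ ^ 2 := by
    gcongr
    exact mul_norm_le_norm_map_of_forall_unit hr hmem
  refine le_of_mul_le_mul_right ?_ (pow_pos (norm_pos_iff.2 hne) 2)
  rw [← mul_pow]
  exact hrx.trans hle

theorem errorRatio_le_of_forall_span (h : IsGramEigenbasis a b μ) (hμ₀ : 0 < μ i₀)
    (hlt : μ i₀ < μ₂) (hμ₂ : ∀ j ≠ i₀, μ₂ ≤ μ j) (hρ : ‖a x‖ ^ 2 < μ₂) (hη₀ : 0 ≤ η)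
    (hη₁ : η < 1)
    (hc : ∀ y, (1 - η) * ‖a y‖ ^ 2 ≤ ‖c y‖ ^ 2 ∧ ‖c y‖ ^ 2 ≤ (1 + η) * ‖a y‖ ^ 2)
    (hq : q = η + (1 - η) * (μ i₀ / μ₂)) (hx₁ : ‖x‖ = 1)
    (hz : ∀ p, ⟪c p, c z⟫_𝕜 = ⟪a p, a x⟫_𝕜 - ((‖a x‖ ^ 2 : ℝ) : 𝕜) * ⟪p, x⟫_𝕜)
    {r : ℝ} (hr₀ : 0 ≤ r) (hr : ∀ y ∈ Submodule.span 𝕜 {x, z}, ‖y‖ = 1 → r ≤ ‖a y‖) :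
    errorRatio (μ i₀) μ₂ (r ^ 2) ≤ q ^ 2 * errorRatio (μ i₀) μ₂ (‖a x‖ ^ 2) := by
  have hlow : μ i₀ ≤ ‖a x‖ ^ 2 := by
    simpa [hx₁] using h.mul_norm_sq_le (le_of_forall_ne_le le_rfl hlt.le hμ₂) x
  have hrx : r ^ 2 ≤ ‖a x‖ ^ 2 := by
    gcongr
    exact hr x (Submodule.subset_span (by simp)) hx₁
  have hmono := (strictMonoOn_errorRatio hlt).monotoneOn
  rcases hlow.eq_or_lt with heq | hlow
  · refine (hmono (hrx.trans_lt hρ) hρ hrx).trans_eq ?_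
    simp [errorRatio, ← heq]
  have hκ : 0 < μ i₀ / μ₂ := div_pos hμ₀ (hμ₀.trans hlt)
  have hκ₁ : μ i₀ / μ₂ ≤ 1 := (div_le_one (hμ₀.trans hlt)).2 hlt.le
  have hq₀ : 0 < q := by rw [hq]; nlinarith
  have hq₁ : q ≤ 1 := by rw [hq]; nlinarith
  have hτ := errorRatio_pos hlow hρ
  obtain ⟨φ, ⟨hφ₀, hφ₂⟩, hφ⟩ := exists_errorRatio_eq hlt (mul_pos (pow_pos hq₀ 2) hτ)
  have hφρ : φ ≤ ‖a x‖ ^ 2 := by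
    refine ((strictMonoOn_errorRatio hlt).le_iff_le hφ₂ hρ).1 ?_
    rw [hφ]
    exact mul_le_of_le_one_left hτ.le (pow_le_one₀ hq₀.le hq₁)
  rw [← hφ]
  exact hmono (hrx.trans_lt hρ) hφ₂ (h.norm_map_sq_le_of_forall_span hμ₀ hμ₂ hφ₀ hφρ hρ hη₀ hη₁.le
    hc hq hφ hx₁ rfl hz hr₀ hr)

theorem errorRatio_le_pow_mul (h : IsGramEigenbasis a b μ) (hμ₀ : 0 < μ i₀)
    (hlt : μ i₀ < μ₂) (hμ₂ : ∀ j ≠ i₀, μ₂ ≤ μ j) (hη₀ : 0 ≤ η) (hη₁ : η < 1)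
    (hc : ∀ y, (1 - η) * ‖a y‖ ^ 2 ≤ ‖c y‖ ^ 2 ∧ ‖c y‖ ^ 2 ≤ (1 + η) * ‖a y‖ ^ 2)
    (hq : q = η + (1 - η) * (μ i₀ / μ₂)) (hunit : ∀ i, ‖v i‖ = 1)
    (hw : ∀ i p, ⟪c p, c (w i)⟫_𝕜 =
      ⟪a p, a (v i)⟫_𝕜 - ((‖a (v i)‖ ^ 2 : ℝ) : 𝕜) * ⟪p, v i⟫_𝕜)
    (hmin : ∀ i, ∀ y ∈ Submodule.span 𝕜 {v i, w i}, ‖y‖ = 1 → ‖a (v (i + 1))‖ ≤ ‖a y‖)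
    (hv₀ : ‖a (v 0)‖ ^ 2 < μ₂) (k : ℕ) :
    errorRatio (μ i₀) μ₂ (‖a (v k)‖ ^ 2) ≤
      q ^ (2 * k) * errorRatio (μ i₀) μ₂ (‖a (v 0)‖ ^ 2) := by
  rw [pow_mul]
  exact le_geom (u := fun i => errorRatio (μ i₀) μ₂ (‖a (v i)‖ ^ 2)) (sq_nonneg q) k fun i _ =>
    h.errorRatio_le_of_forall_span hμ₀ hlt hμ₂ (norm_map_sq_lt_of_forall_span hunit hmin hv₀ i)
      hη₀ hη₁ hc hq (hunit i) (hw i) (norm_nonneg _) (hmin i)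

theorem mul_norm_map_basis_sq_le {b' : OrthonormalBasis ι 𝕜 E} {μ' : ι → ℝ}
    (h : IsGramEigenbasis c b' μ') (hmin : ∀ i, μ' i₀ ≤ μ' i)
    (hc : ∀ y, (1 - η) * ‖a y‖ ^ 2 ≤ ‖c y‖ ^ 2 ∧ ‖c y‖ ^ 2 ≤ (1 + η) * ‖a y‖ ^ 2)
    (hy : ‖y‖ = 1) : (1 - η) * ‖a (b' i₀)‖ ^ 2 ≤ (1 + η) * ‖a y‖ ^ 2 :=
  calc (1 - η) * ‖a (b' i₀)‖ ^ 2 ≤ ‖c (b' i₀)‖ ^ 2 := (hc _).1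
    _ = μ' i₀ * ‖y‖ ^ 2 := by rw [h.norm_map_basis_sq, hy, one_pow, mul_one]
    _ ≤ ‖c y‖ ^ 2 := h.mul_norm_sq_le hmin y
    _ ≤ (1 + η) * ‖a y‖ ^ 2 := (hc y).2

theorem pos_of_mul_norm_map_sq_le {b' : OrthonormalBasis ι 𝕜 E} {μ' : ι → ℝ} {t : ℝ}
    (h : IsGramEigenbasis a b μ) (h' : IsGramEigenbasis c b' μ') (ht₀ : 0 < t)
    (ht : ∀ i, t ≤ μ i) (hη₁ : η < 1) (hc : ∀ y, (1 - η) * ‖a y‖ ^ 2 ≤ ‖c y‖ ^ 2) (i : ι) :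
    0 < μ' i :=
  calc 0 < (1 - η) * t := mul_pos (sub_pos.2 hη₁) ht₀
    _ ≤ (1 - η) * ‖a (b' i)‖ ^ 2 := by
      refine mul_le_mul_of_nonneg_left ?_ (sub_pos.2 hη₁).le
      simpa using h.mul_norm_sq_le ht (b' i)
    _ ≤ ‖c (b' i)‖ ^ 2 := hc _
    _ = μ' i := h'.norm_map_basis_sq i

theorem norm_map_sq_sub_div_le {b' : OrthonormalBasis ι 𝕜 E} {μ' : ι → ℝ} {gap : ℝ}
    (h : IsGramEigenbasis a b μ) (h' : IsGramEigenbasis c b' μ') (hμ₀ : 0 < μ i₀)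
    (hgap : 2 * η < (1 - η) * gap) (hμ₂ : ∀ j ≠ i₀, (1 + gap) * μ i₀ ≤ μ j)
    (hμ' : ∀ i, μ' i₀ ≤ μ' i) (hη₀ : 0 ≤ η) (hη₁ : η < 1)
    (hc : ∀ y, (1 - η) * ‖a y‖ ^ 2 ≤ ‖c y‖ ^ 2 ∧ ‖c y‖ ^ 2 ≤ (1 + η) * ‖a y‖ ^ 2)
    (hq : q = η + (1 - η) / (1 + gap)) (hv₀ : v 0 = b' i₀) (hunit : ∀ i, ‖v i‖ = 1)
    (hw : ∀ i p, ⟪c p, c (w i)⟫_𝕜 =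
      ⟪a p, a (v i)⟫_𝕜 - ((‖a (v i)‖ ^ 2 : ℝ) : 𝕜) * ⟪p, v i⟫_𝕜)
    (hmin : ∀ i, ∀ y ∈ Submodule.span 𝕜 {v i, w i}, ‖y‖ = 1 → ‖a (v (i + 1))‖ ≤ ‖a y‖) (k : ℕ) :
    (‖a (v k)‖ ^ 2 - μ i₀) / μ i₀ ≤ 2 * η / ((1 - η) * gap - 2 * η) * gap * q ^ (2 * k) := by
  have hgap₀ : 0 < gap := pos_of_mul_pos_right (by linarith) (sub_pos.2 hη₁).le
  have hlt : μ i₀ < (1 + gap) * μ i₀ := by linarith [mul_pos hgap₀ hμ₀]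
  have hstart : (1 - η) * ‖a (v 0)‖ ^ 2 ≤ (1 + η) * μ i₀ := by
    rw [hv₀, ← h.norm_map_basis_sq i₀]
    exact h'.mul_norm_map_basis_sq_le hμ' hc (b.norm_eq_one i₀)
  have hv₀_lt := lt_one_add_mul_of_mul_le hμ₀ hη₁ hgap hstart
  have hlow : μ i₀ ≤ ‖a (v k)‖ ^ 2 := by
    simpa [hunit] using h.mul_norm_sq_le (le_of_forall_ne_le le_rfl hlt.le hμ₂) (v k)
  have hq' : q = η + (1 - η) * (μ i₀ / ((1 + gap) * μ i₀)) := by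
    rw [hq, div_mul_cancel_right₀ hμ₀.ne', ← div_eq_mul_inv]
  rw [div_le_iff₀ hμ₀]
  calc ‖a (v k)‖ ^ 2 - μ i₀
      ≤ errorRatio (μ i₀) ((1 + gap) * μ i₀) (‖a (v k)‖ ^ 2) * ((1 + gap) * μ i₀ - μ i₀) :=
        sub_le_errorRatio_mul hlow (norm_map_sq_lt_of_forall_span hunit hmin hv₀_lt k)
    _ ≤ q ^ (2 * k) * (2 * η / ((1 - η) * gap - 2 * η)) * ((1 + gap) * μ i₀ - μ i₀) := by
        refine mul_le_mul_of_nonneg_right ?_ (sub_nonneg.2 hlt.le)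
        refine (h.errorRatio_le_pow_mul hμ₀ hlt hμ₂ hη₀ hη₁ hc hq' hunit hw hmin hv₀_lt k).trans ?_
        exact mul_le_mul_of_nonneg_left (errorRatio_le_of_mul_le hμ₀ hη₁ hgap₀.le hgap hstart)
          (Even.pow_nonneg (even_two_mul k) q)
    _ = 2 * η / ((1 - η) * gap - 2 * η) * gap * q ^ (2 * k) * μ i₀ := by ring

end IsGramEigenbasis

end GramEigenbasis

section Antitone

variable {n : ℕ} {f : Fin n → ℝ}

theorem antitone_sq (hf : Antitone f) (hf₀ : ∀ i, 0 ≤ f i) : Antitone fun i => f i ^ 2 :=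
  fun _ j hij => pow_le_pow_left₀ (hf₀ j) (hf hij) 2

theorem antitone_apply_sub_one_le (hf : Antitone f) (hn : 0 < n) (i : Fin n) :
    f ⟨n - 1, by omega⟩ ≤ f i :=
  hf (Nat.le_sub_one_of_lt i.isLt)

theorem antitone_apply_sub_two_le (hf : Antitone f) (hn : 0 < n) {i : Fin n}
    (hi : i ≠ ⟨n - 1, by omega⟩) : f ⟨n - 2, by omega⟩ ≤ f i := by
  have hne : (i : ℕ) ≠ n - 1 := Fin.val_ne_iff.2 hi
  have hle : (i : ℕ) ≤ n - 2 := by omega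
  exact hf hle

end Antitone

/-! ### The preconditioner from the SVD of the sketch -/

section Matrices

variable {d m n : ℕ} {K U : Matrix (Fin d) (Fin n) ℂ} {V P : Matrix (Fin n) (Fin n) ℂ}
  {s : Fin n → ℝ}

theorem mulE_mul (A : Matrix (Fin d) (Fin m) ℂ) (B : Matrix (Fin m) (Fin n) ℂ)
    (x : EuclideanSpace ℂ (Fin n)) : mulE (A * B) x = mulE A (mulE B x) := by
  simp [mulE, Matrix.toLpLin_apply, Matrix.mulVec_mulVec]

theorem mulE_one (x : EuclideanSpace ℂ (Fin n)) :
    mulE (1 : Matrix (Fin n) (Fin n) ℂ) x = x := by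
  simp [mulE]

theorem mulE_smul (A : Matrix (Fin m) (Fin n) ℂ) (t : ℂ) (x : EuclideanSpace ℂ (Fin n)) :
    mulE A (t • x) = t • mulE A x :=
  map_smul _ _ _

theorem mulE_diagonal_single (f : Fin n → ℂ) (i : Fin n) :
    mulE (diagonal f) (EuclideanSpace.single i 1) = f i • EuclideanSpace.single i 1 := by
  ext j
  by_cases hj : j = i <;> simp [mulE, Matrix.toLpLin_apply, hj]

theorem inner_mulE_mulE (A : Matrix (Fin m) (Fin n) ℂ) (x y : EuclideanSpace ℂ (Fin n)) :
    ⟪mulE A x, mulE A y⟫_ℂ = ⟪x, mulE (Aᴴ * A) y⟫_ℂ := by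
  rw [mulE_mul, mulE, mulE, mulE, Matrix.toEuclideanLin_conjTranspose_eq_adjoint,
    LinearMap.adjoint_inner_right]

theorem orthonormal_mulE_single (hV : Vᴴ * V = 1) :
    Orthonormal ℂ fun i => mulE V (EuclideanSpace.single i 1) := by
  rw [orthonormal_iff_ite]
  intro i j
  rw [inner_mulE_mulE, hV, mulE_one]
  exact orthonormal_iff_ite.1 EuclideanSpace.orthonormal_single i j

theorem exists_isGramEigenbasis (A : Matrix (Fin m) (Fin n) ℂ) {μ : Fin n → ℝ}
    {B : Fin n → EuclideanSpace ℂ (Fin n)} (hB : Orthonormal ℂ B)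
    (hBA : ∀ i, mulE (Aᴴ * A) (B i) = (μ i : ℂ) • B i) :
    ∃ b : OrthonormalBasis (Fin n) ℂ (EuclideanSpace ℂ (Fin n)),
      ⇑b = B ∧ IsGramEigenbasis (Matrix.toEuclideanLin A) b μ := by
  have hspan : ⊤ ≤ Submodule.span ℂ (Set.range B) :=
    (hB.linearIndependent.span_eq_top_of_card_eq_finrank' (by simp)).ge
  refine ⟨OrthonormalBasis.mk hB hspan, OrthonormalBasis.coe_mk hB hspan, fun i x => ?_⟩
  change ⟪mulE A _, mulE A x⟫_ℂ = _
  rw [OrthonormalBasis.coe_mk, ← inner_conj_symm, inner_mulE_mulE, hBA, inner_smul_right, map_mul,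
    Complex.conj_ofReal, inner_conj_symm]
  rfl

theorem conjTranspose_mul_self_of_svd (hU : Uᴴ * U = 1)
    (hK : K = U * diagonal (fun i => (s i : ℂ)) * Vᴴ) :
    Kᴴ * K = V * diagonal (fun i => ((s i ^ 2 : ℝ) : ℂ)) * Vᴴ := by
  have hD : (diagonal fun i => (s i : ℂ))ᴴ = diagonal fun i => (s i : ℂ) := by
    rw [diagonal_conjTranspose]
    congr 1
    ext i
    exact Complex.conj_ofReal _
  calc Kᴴ * K = V * (diagonal (fun i => (s i : ℂ)) * (Uᴴ * U) * diagonal fun i => (s i : ℂ)) *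
        Vᴴ := by
        simp only [hK, conjTranspose_mul, conjTranspose_conjTranspose, hD, Matrix.mul_assoc]
    _ = V * diagonal (fun i => ((s i ^ 2 : ℝ) : ℂ)) * Vᴴ := by
        rw [hU, Matrix.mul_one, diagonal_mul_diagonal]
        simp only [sq, Complex.ofReal_mul]

theorem exists_isGramEigenbasis_of_svd (hU : Uᴴ * U = 1) (hV : Vᴴ * V = 1)
    (hK : K = U * diagonal (fun i => (s i : ℂ)) * Vᴴ) :
    ∃ b : OrthonormalBasis (Fin n) ℂ (EuclideanSpace ℂ (Fin n)),
      (⇑b = fun i => mulE V (EuclideanSpace.single i 1)) ∧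
        IsGramEigenbasis (Matrix.toEuclideanLin K) b fun i => s i ^ 2 := by
  refine exists_isGramEigenbasis K (orthonormal_mulE_single hV) fun i => ?_
  rw [conjTranspose_mul_self_of_svd hU hK, ← mulE_mul, Matrix.mul_assoc, hV, Matrix.mul_one,
    mulE_mul, mulE_diagonal_single, mulE_smul]

theorem conjTranspose_mul_self_mul_mul_conjTranspose (hU : Uᴴ * U = 1) (hV : Vᴴ * V = 1)
    (hs : ∀ i, s i ≠ 0) (hK : K = U * diagonal (fun i => (s i : ℂ)) * Vᴴ)
    (hP : P = V * diagonal fun i => (s i : ℂ)⁻¹) : Kᴴ * K * (P * Pᴴ) = 1 := by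
  have hD : diagonal (fun i => (s i : ℂ)) * diagonal (fun i => (s i : ℂ)⁻¹) = 1 := by
    rw [diagonal_mul_diagonal, ← diagonal_one]
    congr 1
    ext i
    exact mul_inv_cancel₀ (Complex.ofReal_ne_zero.2 (hs i))
  have hKP : K * P = U := by
    rw [hK, hP, Matrix.mul_assoc, ← Matrix.mul_assoc Vᴴ, hV, Matrix.one_mul, Matrix.mul_assoc, hD,
      Matrix.mul_one]
  have hone : Pᴴ * (Kᴴ * K * P) = 1 := by
    rw [Matrix.mul_assoc, hKP, ← Matrix.mul_assoc, ← conjTranspose_mul, hKP, hU]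
  rw [← Matrix.mul_assoc]
  exact mul_eq_one_comm.1 hone

theorem inv_norm_smul_mulE_single (hV : Vᴴ * V = 1) {i : Fin n} (hs : 0 < s i)
    (hP : P = V * diagonal fun i => (s i : ℂ)⁻¹) :
    ‖mulE P (EuclideanSpace.single i 1)‖⁻¹ • mulE P (EuclideanSpace.single i 1) =
      mulE V (EuclideanSpace.single i 1) := by
  have hnorm : ‖mulE V (EuclideanSpace.single i 1)‖ = 1 := (orthonormal_mulE_single hV).1 i
  rw [hP, mulE_mul, mulE_diagonal_single, mulE_smul, norm_smul, hnorm, mul_one, norm_inv, inv_inv,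
    Complex.norm_of_nonneg hs.le, ← Complex.ofReal_inv, Complex.coe_smul, smul_smul,
    mul_inv_cancel₀ hs.ne', one_smul]

theorem inner_mulE_mulE_of_mul_eq_one (A : Matrix (Fin m) (Fin n) ℂ)
    (hP : Kᴴ * K * (P * Pᴴ) = 1) (t : ℂ) (x p : EuclideanSpace ℂ (Fin n)) :
    ⟪mulE K p, mulE K (mulE P (mulE Pᴴ (mulE Aᴴ (mulE A x) - t • x)))⟫_ℂ =
      ⟪mulE A p, mulE A x⟫_ℂ - t * ⟪p, x⟫_ℂ := by
  rw [inner_mulE_mulE, inner_mulE_mulE, ← mulE_mul P, ← mulE_mul, hP, mulE_one, inner_sub_right,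
    inner_smul_right, mulE_mul]

end Matrices

theorem rlobpcg_singular_value_convergence_general
    {d m n : ℕ} (hn : 1 < n)
    (A : Matrix (Fin m) (Fin n) ℂ)
    (σ : Fin n → ℝ) (hσ : HasSingularValues A σ) (hpos : ∀ i, 0 < σ i)
    (gap : ℝ)
    (hgap : gap = (σ ⟨n - 2, by omega⟩ ^ 2 - σ ⟨n - 1, by omega⟩ ^ 2) / σ ⟨n - 1, by omega⟩ ^ 2)
    (S : Matrix (Fin d) (Fin m) ℂ) (η : ℝ) (hη0 : 0 ≤ η) (hη1 : η < 1)
    (hS : IsSubspaceEmbedding S A η)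
    (hηgap : η < gap / (2 + gap))
    (U : Matrix (Fin d) (Fin n) ℂ) (V : Matrix (Fin n) (Fin n) ℂ) (s : Fin n → ℝ)
    (hU : Uᴴ * U = 1) (hV : Vᴴ * V = 1) (hs0 : ∀ i, 0 ≤ s i) (hsa : Antitone s)
    (hSVD : S * A = U * Matrix.diagonal (fun i => (s i : ℂ)) * Vᴴ)
    (P : Matrix (Fin n) (Fin n) ℂ)
    (hP : P = V * Matrix.diagonal (fun i => ((s i : ℂ))⁻¹))
    (e : EuclideanSpace ℂ (Fin n))
    (he : e = EuclideanSpace.single ⟨n - 1, by omega⟩ (1 : ℂ))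
    (v : ℕ → EuclideanSpace ℂ (Fin n))
    (hv0 : v 0 = ‖mulE P e‖⁻¹ • mulE P e)
    (w : ℕ → EuclideanSpace ℂ (Fin n))
    (hw : ∀ i : ℕ, w i = mulE P (mulE Pᴴ
      (mulE Aᴴ (mulE A (v i)) - ((‖mulE A (v i)‖ ^ 2 : ℝ) : ℂ) • v i)))
    (hunit : ∀ i : ℕ, ‖v i‖ = 1)
    (hmin : ∀ i : ℕ, ∀ z ∈
      Submodule.span ℂ ({v i, w i} : Set (EuclideanSpace ℂ (Fin n))),
      ‖z‖ = 1 → ‖mulE A (v (i + 1))‖ ≤ ‖mulE A z‖)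
    (C q : ℝ) (hC : C = 2 * η / ((1 - η) * gap - 2 * η))
    (hq : q = η + (1 - η) / (1 + gap)) :
    ∀ k : ℕ,
      (‖mulE A (v k)‖ ^ 2 - σ ⟨n - 1, by omega⟩ ^ 2) / σ ⟨n - 1, by omega⟩ ^ 2 ≤
        C * gap * q ^ (2 * k) := by
  subst hC he
  obtain ⟨hanti, hσ₀, B, hB, hBA⟩ := hσ
  set i₀ : Fin n := ⟨n - 1, by omega⟩
  have hσ₂ := antitone_sq hanti hσ₀
  have hlow := antitone_apply_sub_one_le hσ₂ (by omega)
  have hl₁ : 0 < σ i₀ ^ 2 := pow_pos (hpos i₀) 2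
  have hgap₀ : 0 ≤ gap := hgap ▸ div_nonneg (sub_nonneg.2 (hlow _)) hl₁.le
  have hσgap : σ ⟨n - 2, by omega⟩ ^ 2 = (1 + gap) * σ i₀ ^ 2 := by
    rw [hgap, one_add_mul, div_mul_cancel₀ _ hl₁.ne', add_sub_cancel]
  obtain ⟨b, -, hb⟩ := exists_isGramEigenbasis A hB hBA
  obtain ⟨b', hb'V, hb'⟩ := exists_isGramEigenbasis_of_svd hU hV hSVD
  have hs : ∀ i, 0 < s i := fun i => (hs0 i).lt_of_ne' <| sq_pos_iff.1 <|
    hb.pos_of_mul_norm_map_sq_le hb' hl₁ hlow hη1 (fun y => (hS y).1) i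
  have hinv := conjTranspose_mul_self_mul_mul_conjTranspose hU hV (fun i => (hs i).ne') hSVD hP
  refine hb.norm_map_sq_sub_div_le hb' hl₁ (two_mul_lt_of_lt_div hgap₀ hηgap)
    (fun i hi => hσgap ▸ antitone_apply_sub_two_le hσ₂ (by omega) hi)
    (antitone_apply_sub_one_le (antitone_sq hsa hs0) (by omega)) hη0 hη1 hS hq ?_ hunit
    (fun i p => ?_) hmin
  · rw [hv0, hb'V, inv_norm_smul_mulE_single hV (hs i₀) hP]
  · exact (hw i).symm ▸ inner_mulE_mulE_of_mul_eq_one A hinv _ (v i) p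

/-- RLOBPCG convergence: singular value bound, Theorem 1.2, eq. (1.5):
under the subspace-embedding and distortion–gap hypotheses, the RLOBPCG iterates
(with sketch-and-solve initialization `v₀ = v₋₁ = P eₙ/‖P eₙ‖`, search directions
`wᵢ = P(Pᴴ(Aᴴ(A vᵢ) − ‖A vᵢ‖² vᵢ))`, and `vᵢ₊₁` a unit-norm minimizer of `‖Az‖` over the
unit sphere of `span{vᵢ₋₁, vᵢ, wᵢ}`) satisfy
`(‖A v_k‖² − σₙ²)/σₙ² ≤ C·gap·q^{2k}` with `C = 2η/((1−η)gap − 2η)` and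
`q = η + (1−η)/(1+gap)`.  (Indices: `σ ⟨n-1⟩ = σₙ`, `σ ⟨n-2⟩ = σₙ₋₁`; `v (i-1)` uses
truncated subtraction so that `v₋₁ = v₀`.) -/
theorem rlobpcg_singular_value_convergence
    {d m n : ℕ} (hn : 2 ≤ n)
    (A : Matrix (Fin m) (Fin n) ℂ)
    (hrank : Function.Injective (mulE A))
    (σ : Fin n → ℝ) (hσ : HasSingularValues A σ) (hpos : ∀ i, 0 < σ i)
    (gap : ℝ)
    (hgap : gap = (σ ⟨n - 2, by omega⟩ ^ 2 - σ ⟨n - 1, by omega⟩ ^ 2) / σ ⟨n - 1, by omega⟩ ^ 2)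
    (S : Matrix (Fin d) (Fin m) ℂ) (η : ℝ) (hη0 : 0 ≤ η) (hη1 : η < 1)
    (hS : IsSubspaceEmbedding S A η)
    (hηgap : η < gap / (2 + gap))
    (U : Matrix (Fin d) (Fin n) ℂ) (V : Matrix (Fin n) (Fin n) ℂ) (s : Fin n → ℝ)
    (hU : Uᴴ * U = 1) (hV : Vᴴ * V = 1) (hs0 : ∀ i, 0 ≤ s i) (hsa : Antitone s)
    (hSVD : S * A = U * Matrix.diagonal (fun i => (s i : ℂ)) * Vᴴ)
    (P : Matrix (Fin n) (Fin n) ℂ)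
    (hP : P = V * Matrix.diagonal (fun i => ((s i : ℂ))⁻¹))
    (e : EuclideanSpace ℂ (Fin n))
    (he : e = EuclideanSpace.single ⟨n - 1, by omega⟩ (1 : ℂ))
    (v : ℕ → EuclideanSpace ℂ (Fin n))
    (hv0 : v 0 = ‖mulE P e‖⁻¹ • mulE P e)
    (w : ℕ → EuclideanSpace ℂ (Fin n))
    (hw : ∀ i : ℕ, w i = mulE P (mulE Pᴴ
      (mulE Aᴴ (mulE A (v i)) - ((‖mulE A (v i)‖ ^ 2 : ℝ) : ℂ) • v i)))
    (hunit : ∀ i : ℕ, ‖v i‖ = 1)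
    (hmem : ∀ i : ℕ, v (i + 1) ∈
      Submodule.span ℂ ({v (i - 1), v i, w i} : Set (EuclideanSpace ℂ (Fin n))))
    (hmin : ∀ i : ℕ, ∀ z ∈
      Submodule.span ℂ ({v (i - 1), v i, w i} : Set (EuclideanSpace ℂ (Fin n))),
      ‖z‖ = 1 → ‖mulE A (v (i + 1))‖ ≤ ‖mulE A z‖)
    (C q : ℝ) (hC : C = 2 * η / ((1 - η) * gap - 2 * η))
    (hq : q = η + (1 - η) / (1 + gap)) :
    ∀ k : ℕ,
      (‖mulE A (v k)‖ ^ 2 - σ ⟨n - 1, by omega⟩ ^ 2) / σ ⟨n - 1, by omega⟩ ^ 2 ≤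
        C * gap * q ^ (2 * k) := by
  exact rlobpcg_singular_value_convergence_general hn A σ hσ hpos gap hgap S η hη0 hη1 hS hηgap
    U V s hU hV hs0 hsa hSVD P hP e he v hv0 w hw hunit
    (fun i z hz => hmin i z (Submodule.span_mono (by simp) hz)) C q hC hq
end
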